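/- Let b > 1, β ∈ (0, 1/2), and s ∈ (2, 3 − 2β). There exists a constant C₀ > 0, depending only on b, β and s, such that for all x, y ∈ [0,1] with 0 < |x − y| ≤ 1/(2b²), the expectation over (Θ, Λ) with respect to the infinite product of uniform measures on [0,1] satisfies E[ ((x − y)² + |f_{Θ,Λ}(x) − f_{Θ,Λ}(y)|²)^{−s/2} ] ≤ C₀ |x − y|^{2 − s − 2β}. -/

import Mathlib

open MeasureTheory

/-- First coordinate of the random vector-valued Weierstrass function
`t ↦ ∑ b^{-βn} cos(2π(bⁿ t + θₙ))`. -/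
noncomputable def W1 (b β : ℝ) (Θ : ℕ → ℝ) (t : ℝ) : ℝ :=
  ∑' n : ℕ, b ^ (-β * (n : ℝ)) * Real.cos (2 * Real.pi * (b ^ n * t + Θ n))

/-- Second coordinate of the random vector-valued Weierstrass function
`t ↦ ∑ b^{-βn} sin(2π(bⁿ t + λₙ))`. -/
noncomputable def W2 (b β : ℝ) (Λ : ℕ → ℝ) (t : ℝ) : ℝ :=
  ∑' n : ℕ, b ^ (-β * (n : ℝ)) * Real.sin (2 * Real.pi * (b ^ n * t + Λ n))

/-- Euclidean distance `|f_{Θ,Λ}(x) - f_{Θ,Λ}(y)|` in ℝ². -/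
noncomputable def Wdist (b β : ℝ) (Θ Λ : ℕ → ℝ) (x y : ℝ) : ℝ :=
  Real.sqrt ((W1 b β Θ x - W1 b β Θ y) ^ 2 + (W2 b β Λ x - W2 b β Λ y) ^ 2)

/-- The graph `G(f_{Θ,Λ}) = {(t, f_{Θ,Λ}(t)) : t ∈ [0,1]}` inside ℝ³ = ℝ × ℝ². -/
def Wgraph (b β : ℝ) (Θ Λ : ℕ → ℝ) : Set (ℝ × ℝ × ℝ) :=
  {p | ∃ t ∈ Set.Icc (0 : ℝ) 1, p = (t, W1 b β Θ t, W2 b β Λ t)}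

/-- `μ` is the infinite product over `ℕ` of the uniform probability measures on `[0,1]`:
the measure of every measurable cylinder is the corresponding finite product of
uniform measures. -/
def IsUniformProductMeasure (μ : Measure (ℕ → ℝ)) : Prop :=
  ∀ (t : Finset ℕ) (s : ℕ → Set ℝ), (∀ i, MeasurableSet (s i)) →
    μ {f : ℕ → ℝ | ∀ i ∈ t, f i ∈ s i} =
      ∏ i ∈ t, (volume.restrict (Set.Icc (0 : ℝ) 1)) (s i)

/-!
Since `(h² + u² + v²)² ≥ (h² + u²)(h² + v²)`, the expectation is at most a product of two
one-coordinate expectations `E[(h² + X²) ^ (-s/4)]` with `h = |x - y|`. Each increment `X` is a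
random phase series `∑ qₙ sin (2π θₙ + rₙ)`, and the frequencies `bⁿ ≈ 1/h` provide three
consecutive amplitudes `|qₙ|` bounded below by a multiple of `h ^ β`.

A single random phase has an unbounded (arcsine) density, but three of them give `X` a density
bounded by a multiple of `h ^ (-β)`: the largest of their cosines `c₁, c₂, c₃`, say `c₁`, satisfies
`1 ≤ |c₁| |c₂| ^ (-1/2) |c₃| ^ (-1/2)`, where `|c₁|` is the Jacobian of a change of variables in the
corresponding phase and the independent factors `|c₂| ^ (-1/2)`, `|c₃| ^ (-1/2)` have finite mean.
Scaling `∫ (h² + u²) ^ (-s/4) du = const * h ^ (1 - s/2)` then bounds each expectation by a multiple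
of `h ^ (1 - s/2 - β)`.
-/

open Real Set Function
open scoped ENNReal

/-- The law of a uniform random phase on `[0, 1]`, in the form used by
`IsUniformProductMeasure`. -/
noncomputable abbrev uniformPhase : Measure ℝ := volume.restrict (Icc 0 1)

instance isProbabilityMeasure_uniformPhase : IsProbabilityMeasure uniformPhase :=
  ⟨by simp [uniformPhase]⟩

lemma setLIntegral_Ioc_add_eq_of_periodic {g : ℝ → ℝ≥0∞} {T : ℝ} (hT : 0 < T)
    (hg : Periodic g T) (a c : ℝ) :
    ∫⁻ u in Ioc a (a + T), g u = ∫⁻ u in Ioc c (c + T), g u :=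
  (isAddFundamentalDomain_Ioc hT a).setLIntegral_eq (isAddFundamentalDomain_Ioc hT c) g
    hg.map_vadd_zmultiples

lemma lintegral_uniformPhase_comp_of_periodic {g : ℝ → ℝ≥0∞} {T : ℝ} (hT : 0 < T)
    (hg : Periodic g T) (r a : ℝ) :
    ENNReal.ofReal T * ∫⁻ t, g (T * t + r) ∂uniformPhase = ∫⁻ u in Ioc a (a + T), g u := by
  have himage : (fun t => T * t + r) '' Icc 0 1 = Icc r (r + T) := by
    rw [image_affine_Icc' hT]; ring_nf
  rw [setLIntegral_Ioc_add_eq_of_periodic hT hg a r, setLIntegral_congr Ioc_ae_eq_Icc, ← himage,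
    lintegral_image_eq_lintegral_abs_deriv_mul measurableSet_Icc (f' := fun _ => T)
      (fun t _ => by simpa using ((hasDerivAt_id t).const_mul T).add_const r |>.hasDerivWithinAt)
      (fun t _ t' _ h => by simpa [hT.ne'] using h),
    abs_of_pos hT, lintegral_const_mul' _ _ ENNReal.ofReal_ne_top]

lemma lintegral_uniformPhase_comp_two_pi_mul_add {g : ℝ → ℝ≥0∞} (hg : Periodic g (2 * π))
    (r : ℝ) :
    ENNReal.ofReal (2 * π) * ∫⁻ t, g (2 * π * t + r) ∂uniformPhase =
      (∫⁻ u in Ioc (-(π / 2)) (π / 2), g u) + ∫⁻ u in Ioc (-(π / 2)) (π / 2), g (u + π) := by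
  have hshift : ∫⁻ u in Ioc (-(π / 2)) (π / 2), g (u + π) =
      ∫⁻ u in Ioc (π / 2) (-(π / 2) + 2 * π), g u := by
    rw [(measurePreserving_add_right volume π).setLIntegral_comp_emb
      (measurableEmbedding_addRight π) g, image_add_const_Ioc]
    ring_nf
  rw [lintegral_uniformPhase_comp_of_periodic two_pi_pos hg r (-(π / 2)), hshift,
    ← lintegral_union measurableSet_Ioc (Ioc_disjoint_Ioc_of_le le_rfl),
    Ioc_union_Ioc_eq_Ioc (by linarith [pi_pos]) (by linarith [pi_pos])]

lemma setLIntegral_enorm_cos_mul_comp_sin_le (S Q : ℝ) (φ : ℝ → ℝ≥0∞) :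
    ‖Q‖ₑ * ∫⁻ u in Ioc (-(π / 2)) (π / 2), ‖cos u‖ₑ * φ (S + Q * sin u) ≤ ∫⁻ u, φ u := by
  rcases eq_or_ne Q 0 with rfl | hQ
  · simp
  calc ‖Q‖ₑ * ∫⁻ u in Ioc (-(π / 2)) (π / 2), ‖cos u‖ₑ * φ (S + Q * sin u)
      = ∫⁻ u in Ioc (-(π / 2)) (π / 2), ENNReal.ofReal |Q * cos u| * φ (S + Q * sin u) := by
        simp_rw [← lintegral_const_mul' _ _ enorm_ne_top, ← enorm_eq_ofReal_abs, enorm_mul,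
          mul_assoc]
    _ = ∫⁻ v in (fun u => S + Q * sin u) '' Ioc (-(π / 2)) (π / 2), φ v :=
        (lintegral_image_eq_lintegral_abs_deriv_mul measurableSet_Ioc
          (fun u _ => (((hasDerivAt_sin u).const_mul Q).const_add S).hasDerivWithinAt)
          (fun u hu v hv h => injOn_sin (Ioc_subset_Icc_self hu) (Ioc_subset_Icc_self hv)
            (by simpa [hQ] using h)) φ).symm
    _ ≤ ∫⁻ u, φ u := setLIntegral_le_lintegral _ _

lemma lintegral_enorm_cos_mul_comp_sin_le (S Q r : ℝ) (φ : ℝ → ℝ≥0∞) :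
    ‖Q‖ₑ * ∫⁻ t, ‖cos (2 * π * t + r)‖ₑ * φ (S + Q * sin (2 * π * t + r)) ∂uniformPhase ≤
      ∫⁻ u, φ u := by
  have hperiodic : Periodic (fun u => ‖cos u‖ₑ * φ (S + Q * sin u)) (2 * π) := fun u => by
    simp only [cos_add_two_pi, sin_add_two_pi]
  have hdouble : ENNReal.ofReal (2 * π) *
      (‖Q‖ₑ * ∫⁻ t, ‖cos (2 * π * t + r)‖ₑ * φ (S + Q * sin (2 * π * t + r)) ∂uniformPhase) ≤
        2 * ∫⁻ u, φ u := by
    rw [mul_left_comm, lintegral_uniformPhase_comp_two_pi_mul_add hperiodic, mul_add, two_mul]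
    gcongr
    · exact setLIntegral_enorm_cos_mul_comp_sin_le S Q φ
    · simpa using setLIntegral_enorm_cos_mul_comp_sin_le S (-Q) φ
  have htwo : (2 : ℝ≥0∞) ≤ ENNReal.ofReal (2 * π) := by
    rw [← ENNReal.ofReal_ofNat]
    exact ENNReal.ofReal_le_ofReal (by linarith [pi_gt_three])
  exact (ENNReal.mul_le_mul_iff_right two_ne_zero ENNReal.ofNat_ne_top).1
    ((mul_le_mul_left htwo _).trans hdouble)

/-- The absolute `p`-th moment of the cosine of a uniform random angle; it is used for `p < 0`,
where a zero of the cosine contributes the value `∞`. -/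
noncomputable def cosMoment (p : ℝ) : ℝ≥0∞ :=
  ∫⁻ t, ‖cos (2 * π * t)‖ₑ ^ p ∂uniformPhase

lemma ofReal_pi_mul_lintegral_enorm_cos_rpow (p r : ℝ) :
    ENNReal.ofReal π * ∫⁻ t, ‖cos (2 * π * t + r)‖ₑ ^ p ∂uniformPhase =
      ∫⁻ u in Ioc (-(π / 2)) (π / 2), ‖sin u‖ₑ ^ p := by
  have hperiodic : Periodic (fun u => ‖sin u‖ₑ ^ p) (2 * π) := fun u => by
    simp only [sin_add_two_pi]
  have hdouble := lintegral_uniformPhase_comp_two_pi_mul_add hperiodic (r + π / 2)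
  simp only [← add_assoc, sin_add_pi_div_two, sin_add_pi, enorm_neg, ← two_mul] at hdouble
  rwa [ENNReal.ofReal_mul zero_le_two, ENNReal.ofReal_ofNat, mul_assoc,
    ENNReal.mul_right_inj two_ne_zero ENNReal.ofNat_ne_top] at hdouble

lemma lintegral_enorm_cos_rpow (p r : ℝ) :
    ∫⁻ t, ‖cos (2 * π * t + r)‖ₑ ^ p ∂uniformPhase = cosMoment p := by
  refine (ENNReal.mul_right_inj (by simp [pi_pos]) ENNReal.ofReal_ne_top).1
    ((ofReal_pi_mul_lintegral_enorm_cos_rpow p r).trans ?_)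
  simpa [cosMoment] using (ofReal_pi_mul_lintegral_enorm_cos_rpow p 0).symm

lemma intervalIntegrable_abs_rpow {p : ℝ} (hp : -1 < p) (a b : ℝ) :
    IntervalIntegrable (fun u => |u| ^ p) volume a b := by
  refine intervalIntegrable_of_even (fun u => by rw [abs_neg]) fun x hx => ?_
  refine (intervalIntegral.intervalIntegrable_rpow' hp).congr fun u hu => ?_
  rw [uIoc_of_le hx.le] at hu
  simp only [abs_of_pos hu.1]

lemma cosMoment_lt_top {p : ℝ} (hp : -1 < p) (hp' : p ≤ 0) : cosMoment p < ∞ := by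
  have hmajorant : IntegrableOn (fun u => (2 / π * |u|) ^ p) (Ioc (-(π / 2)) (π / 2)) := by
    simp_rw [mul_rpow (by positivity : (0:ℝ) ≤ 2 / π) (abs_nonneg _)]
    rw [← intervalIntegrable_iff_integrableOn_Ioc_of_le (by linarith [pi_pos])]
    exact (intervalIntegrable_abs_rpow hp _ _).const_mul _
  have hsin : ∫⁻ u in Ioc (-(π / 2)) (π / 2), ‖sin u‖ₑ ^ p < ∞ := by
    refine lt_of_le_of_lt (lintegral_mono_ae ?_) hmajorant.lintegral_lt_top
    filter_upwards [ae_restrict_mem measurableSet_Ioc,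
      ae_restrict_of_ae (volume.ae_ne 0)] with u hu hu0
    have hpos : 0 < 2 / π * |u| := by positivity
    have hJordan := mul_abs_le_abs_sin (abs_le.2 (Ioc_subset_Icc_self hu))
    rw [enorm_eq_ofReal_abs, ENNReal.ofReal_rpow_of_pos (hpos.trans_le hJordan)]
    exact ENNReal.ofReal_le_ofReal (rpow_le_rpow_of_nonpos hpos hJordan hp')
  rw [← ofReal_pi_mul_lintegral_enorm_cos_rpow p 0, lintegral_enorm_cos_rpow] at hsin
  exact (ENNReal.lt_top_of_mul_ne_top_right hsin.ne (by simp [pi_pos]))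

section Resampling

variable {ι : Type*} [DecidableEq ι] {Ω : ι → Type*} {mΩ : ∀ i, MeasurableSpace (Ω i)}
  (P : ∀ i, Measure (Ω i)) [∀ i, IsProbabilityMeasure (P i)]

lemma measurePreserving_update_infinitePi (i : ι) :
    MeasurePreserving (fun p : (∀ j, Ω j) × Ω i => update p.1 i p.2)
      ((Measure.infinitePi P).prod (P i)) (Measure.infinitePi P) := by
  refine ⟨measurable_update', Measure.eq_infinitePi P fun s t ht => ?_⟩
  have hbox : (fun p : (∀ j, Ω j) × Ω i => update p.1 i p.2) ⁻¹' (s : Set ι).pi t =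
      (↑(s.erase i) : Set ι).pi t ×ˢ {x | i ∈ s → x ∈ t i} := by
    ext p
    simp only [mem_preimage, update_mem_pi_iff, mem_prod, Finset.coe_erase, Finset.mem_coe,
      mem_ofPred_eq]
  rw [Measure.map_apply measurable_update' (.pi s.countable_toSet fun j _ => ht j), hbox,
    Measure.prod_prod, Measure.infinitePi_pi P fun j _ => ht j]
  by_cases hi : i ∈ s
  · simp only [hi, forall_const, ofPred_mem_eq]
    exact Finset.prod_erase_mul s (fun j => P j (t j)) hi
  · simp [hi]

lemma lintegral_infinitePi_eq_lintegral_update (i : ι) {F : (∀ j, Ω j) → ℝ≥0∞}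
    (hF : Measurable F) :
    ∫⁻ ω, F ω ∂Measure.infinitePi P =
      ∫⁻ ω, ∫⁻ x, F (update ω i x) ∂P i ∂Measure.infinitePi P := by
  rw [← (measurePreserving_update_infinitePi P i).lintegral_comp hF]
  exact lintegral_prod _ (hF.comp measurable_update').aemeasurable

end Resampling

/-- The law of a family of independent uniform random phases. -/
noncomputable abbrev phaseMeasure (ι : Type*) : Measure (ι → ℝ) :=
  Measure.infinitePi fun _ => uniformPhase

section PhaseSeries

variable {ι : Type*}

/-- A random phase series: a superposition of sine waves with amplitudes `q i` and phases
`2π Θ i + r i`. -/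
noncomputable def phaseSeries (q r Θ : ι → ℝ) : ℝ :=
  ∑' i, q i * sin (2 * π * Θ i + r i)

/-- The Jacobian factor `|cos|` of the `i`-th term of a random phase series, valued in `ℝ≥0∞` so
that its negative powers are infinite where the cosine vanishes. -/
noncomputable def phaseCos (r : ι → ℝ) (i : ι) (Θ : ι → ℝ) : ℝ≥0∞ :=
  ‖cos (2 * π * Θ i + r i)‖ₑ

@[fun_prop]
lemma measurable_phaseCos (r : ι → ℝ) (i : ι) : Measurable (phaseCos r i) := by
  unfold phaseCos; fun_prop

lemma phaseCos_update_of_ne [DecidableEq ι] (r : ι → ℝ) {i k : ι} (hik : i ≠ k) (Θ : ι → ℝ)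
    (t : ℝ) : phaseCos r i (update Θ k t) = phaseCos r i Θ := by
  rw [phaseCos, update_of_ne hik, phaseCos]

lemma lintegral_phaseCos_rpow (r : ι → ℝ) (i : ι) (p : ℝ) :
    ∫⁻ Θ, phaseCos r i Θ ^ p ∂phaseMeasure ι = cosMoment p := by
  rw [← lintegral_enorm_cos_rpow p (r i)]
  exact (measurePreserving_eval_infinitePi (fun _ : ι => uniformPhase) i).lintegral_comp
    (f := fun t => ‖cos (2 * π * t + r i)‖ₑ ^ p) (by fun_prop)

lemma lintegral_phaseCos_rpow_mul_phaseCos_rpow (r : ι → ℝ) {i j : ι} (hij : i ≠ j) (p : ℝ) :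
    ∫⁻ Θ, phaseCos r i Θ ^ p * phaseCos r j Θ ^ p ∂phaseMeasure ι = cosMoment p ^ 2 := by
  have hindep := (ProbabilityTheory.iIndepFun_infinitePi (P := fun _ : ι => uniformPhase)
    (X := fun k t => ‖cos (2 * π * t + r k)‖ₑ ^ p) (by fun_prop)).indepFun hij
  have hprod := ProbabilityTheory.lintegral_mul_eq_lintegral_mul_lintegral_of_indepFun
    (by fun_prop) (by fun_prop) hindep
  exact hprod.trans (by
    rw [sq]; exact congr_arg₂ _ (lintegral_phaseCos_rpow r i p) (lintegral_phaseCos_rpow r j p))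

lemma ae_phaseCos_ne_zero (r : ι → ℝ) (i : ι) : ∀ᵐ Θ ∂phaseMeasure ι, phaseCos r i Θ ≠ 0 := by
  have hfinite : ∫⁻ Θ, phaseCos r i Θ ^ (-(1 / 2) : ℝ) ∂phaseMeasure ι ≠ ∞ := by
    rw [lintegral_phaseCos_rpow]
    exact (cosMoment_lt_top (by norm_num) (by norm_num)).ne
  filter_upwards [ae_lt_top (by fun_prop) hfinite] with Θ hΘ hzero
  rw [hzero, ENNReal.zero_rpow_of_neg (by norm_num)] at hΘ
  exact lt_irrefl _ hΘ

lemma norm_phaseSeries_term_le (q r Θ : ι → ℝ) (i : ι) :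
    ‖q i * sin (2 * π * Θ i + r i)‖ ≤ |q i| := by
  rw [norm_mul, norm_eq_abs]
  exact mul_le_of_le_one_right (abs_nonneg _) (abs_sin_le_one _)

lemma measurable_phaseSeries [Countable ι] {q : ι → ℝ} (hq : Summable fun i => |q i|)
    (r : ι → ℝ) : Measurable (phaseSeries q r) :=
  (continuous_tsum (fun i => by fun_prop) hq
    fun i Θ => norm_phaseSeries_term_le q r Θ i).measurable

lemma exists_phaseSeries_update_eq [DecidableEq ι] {q : ι → ℝ} (hq : Summable fun i => |q i|)
    (r : ι → ℝ) (k : ι) (Θ : ι → ℝ) :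
    ∃ S, ∀ t, phaseSeries q r (update Θ k t) = S + q k * sin (2 * π * t + r k) := by
  refine ⟨∑' i, if i = k then 0 else q i * sin (2 * π * Θ i + r i), fun t => ?_⟩
  have hsummable : Summable fun i => q i * sin (2 * π * update Θ k t i + r i) :=
    .of_norm_bounded hq (norm_phaseSeries_term_le q r _)
  rw [phaseSeries, hsummable.tsum_eq_add_tsum_ite k, add_comm, update_self]
  congr 1
  refine tsum_congr fun i => ?_
  split_ifs with hi
  · rfl
  · rw [update_of_ne hi]

lemma enorm_mul_lintegral_comp_phaseSeries_mul_phaseCos_le [Countable ι] [DecidableEq ι]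
    {q : ι → ℝ} (hq : Summable fun i => |q i|) (r : ι → ℝ) (k : ι) {φ : ℝ → ℝ≥0∞}
    (hφ : Measurable φ) {G : (ι → ℝ) → ℝ≥0∞} (hG : Measurable G)
    (hGk : ∀ Θ t, G (update Θ k t) = G Θ) :
    ‖q k‖ₑ * ∫⁻ Θ, φ (phaseSeries q r Θ) * (phaseCos r k Θ * G Θ) ∂phaseMeasure ι ≤
      (∫⁻ Θ, G Θ ∂phaseMeasure ι) * ∫⁻ u, φ u := by
  have hX := measurable_phaseSeries hq r
  rw [lintegral_infinitePi_eq_lintegral_update _ k (by fun_prop),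
    ← lintegral_const_mul' _ _ enorm_ne_top, ← lintegral_mul_const _ hG]
  refine lintegral_mono fun Θ => ?_
  obtain ⟨S, hS⟩ := exists_phaseSeries_update_eq hq r k Θ
  simp only [hS, hGk, phaseCos, update_self]
  calc ‖q k‖ₑ * ∫⁻ t, φ (S + q k * sin (2 * π * t + r k)) *
          (‖cos (2 * π * t + r k)‖ₑ * G Θ) ∂uniformPhase
      = G Θ * (‖q k‖ₑ * ∫⁻ t, ‖cos (2 * π * t + r k)‖ₑ *
          φ (S + q k * sin (2 * π * t + r k)) ∂uniformPhase) := by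
        rw [mul_left_comm (G Θ), ← lintegral_const_mul (G Θ) (by fun_prop)]
        congr 1
        exact lintegral_congr fun t => by ring
    _ ≤ G Θ * ∫⁻ u, φ u := by gcongr; exact lintegral_enorm_cos_mul_comp_sin_le S (q k) (r k) φ

lemma one_le_mul_rpow_neg_half_mul_rpow_neg_half {x y z : ℝ≥0∞} (hx : x ≤ z) (hy : y ≤ z)
    (hz : z ≠ 0) (hz' : z ≠ ∞) : 1 ≤ z * (x ^ (-(1 / 2) : ℝ) * y ^ (-(1 / 2) : ℝ)) := by
  have hanti {w : ℝ≥0∞} (hw : w ≤ z) : z ^ (-(1 / 2) : ℝ) ≤ w ^ (-(1 / 2) : ℝ) := by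
    rw [ENNReal.rpow_neg, ENNReal.rpow_neg]
    exact ENNReal.inv_le_inv.2 (ENNReal.rpow_le_rpow hw (by norm_num))
  calc (1 : ℝ≥0∞) = z * (z ^ (-(1 / 2) : ℝ) * z ^ (-(1 / 2) : ℝ)) := by
        rw [← ENNReal.rpow_add _ _ hz hz', ← neg_add, add_halves, ENNReal.rpow_neg_one,
          ENNReal.mul_inv_cancel hz hz']
    _ ≤ z * (x ^ (-(1 / 2) : ℝ) * y ^ (-(1 / 2) : ℝ)) := by
        gcongr z * (?_ * ?_)
        exacts [hanti hx, hanti hy]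

lemma one_le_sum_mul_rpow_neg_half {x y z : ℝ≥0∞} (hx : x ≠ 0) (hy : y ≠ 0) (hz : z ≠ 0)
    (hx' : x ≠ ∞) (hy' : y ≠ ∞) (hz' : z ≠ ∞) :
    1 ≤ x * (y ^ (-(1 / 2) : ℝ) * z ^ (-(1 / 2) : ℝ)) +
      y * (z ^ (-(1 / 2) : ℝ) * x ^ (-(1 / 2) : ℝ)) +
      z * (x ^ (-(1 / 2) : ℝ) * y ^ (-(1 / 2) : ℝ)) := by
  have hmax : (y ≤ x ∧ z ≤ x) ∨ (z ≤ y ∧ x ≤ y) ∨ (x ≤ z ∧ y ≤ z) := by grind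
  rcases hmax with ⟨hyx, hzx⟩ | ⟨hzy, hxy⟩ | ⟨hxz, hyz⟩
  · exact (one_le_mul_rpow_neg_half_mul_rpow_neg_half hyx hzx hx hx').trans
      (le_self_add.trans le_self_add)
  · exact (one_le_mul_rpow_neg_half_mul_rpow_neg_half hzy hxy hy hy').trans
      (le_add_self.trans le_self_add)
  · exact (one_le_mul_rpow_neg_half_mul_rpow_neg_half hxz hyz hz hz').trans le_add_self

theorem mul_lintegral_comp_phaseSeries_le [Countable ι] {q : ι → ℝ}
    (hq : Summable fun i => |q i|) (r : ι → ℝ) {i j k : ι} (hij : i ≠ j) (hjk : j ≠ k)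
    (hki : k ≠ i) {κ : ℝ≥0∞} (hi : κ ≤ ‖q i‖ₑ) (hj : κ ≤ ‖q j‖ₑ) (hk : κ ≤ ‖q k‖ₑ)
    {φ : ℝ → ℝ≥0∞} (hφ : Measurable φ) :
    κ * ∫⁻ Θ, φ (phaseSeries q r Θ) ∂phaseMeasure ι ≤
      3 * cosMoment (-(1 / 2)) ^ 2 * ∫⁻ u, φ u := by
  classical
  have hX := measurable_phaseSeries hq r
  let term (a b c : ι) (Θ : ι → ℝ) : ℝ≥0∞ := φ (phaseSeries q r Θ) *
    (phaseCos r a Θ * (phaseCos r b Θ ^ (-(1 / 2) : ℝ) * phaseCos r c Θ ^ (-(1 / 2) : ℝ)))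
  have hterm_meas (a b c : ι) : Measurable (term a b c) := by fun_prop
  have hterm {a b c : ι} (hab : a ≠ b) (hbc : b ≠ c) (hca : c ≠ a) (ha : κ ≤ ‖q a‖ₑ) :
      κ * ∫⁻ Θ, term a b c Θ ∂phaseMeasure ι ≤ cosMoment (-(1 / 2)) ^ 2 * ∫⁻ u, φ u := by
    rw [← lintegral_phaseCos_rpow_mul_phaseCos_rpow r hbc]
    refine (mul_le_mul_left ha _).trans
      (enorm_mul_lintegral_comp_phaseSeries_mul_phaseCos_le hq r a hφ (by fun_prop) fun Θ t => ?_)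
    rw [phaseCos_update_of_ne r hab.symm, phaseCos_update_of_ne r hca]
  have hsplit : ∀ᵐ Θ ∂phaseMeasure ι,
      φ (phaseSeries q r Θ) ≤ term i j k Θ + term j k i Θ + term k i j Θ := by
    filter_upwards [ae_phaseCos_ne_zero r i, ae_phaseCos_ne_zero r j, ae_phaseCos_ne_zero r k]
      with Θ hi0 hj0 hk0
    simp only [term, ← mul_add]
    exact le_mul_of_one_le_right' (one_le_sum_mul_rpow_neg_half hi0 hj0 hk0
      enorm_ne_top enorm_ne_top enorm_ne_top)
  calc κ * ∫⁻ Θ, φ (phaseSeries q r Θ) ∂phaseMeasure ι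
      ≤ κ * ∫⁻ Θ, (term i j k Θ + term j k i Θ + term k i j Θ) ∂phaseMeasure ι := by
        gcongr 1; exact lintegral_mono_ae hsplit
    _ = κ * ∫⁻ Θ, term i j k Θ ∂phaseMeasure ι + κ * ∫⁻ Θ, term j k i Θ ∂phaseMeasure ι +
          κ * ∫⁻ Θ, term k i j Θ ∂phaseMeasure ι := by
        rw [lintegral_add_left (by fun_prop), lintegral_add_left (by fun_prop), mul_add, mul_add]
    _ ≤ 3 * cosMoment (-(1 / 2)) ^ 2 * ∫⁻ u, φ u := by
        refine (add_le_add_three (hterm hij hjk hki hi) (hterm hjk hki hij hj)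
          (hterm hki hij hjk hk)).trans_eq ?_
        ring

end PhaseSeries

section Energy

variable {h p : ℝ}

lemma lintegral_ofReal_sq_add_sq_rpow (hh : h ≠ 0) (p : ℝ) :
    ∫⁻ u : ℝ, ENNReal.ofReal ((h ^ 2 + u ^ 2) ^ (-p)) =
      ENNReal.ofReal (|h| ^ (1 - 2 * p)) *
        ∫⁻ u : ℝ, ENNReal.ofReal ((1 + u ^ 2) ^ (-p)) := by
  have hscale (u : ℝ) :
      |h| * (h ^ 2 + (h * u) ^ 2) ^ (-p) = |h| ^ (1 - 2 * p) * (1 + u ^ 2) ^ (-p) := by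
    rw [show h ^ 2 + (h * u) ^ 2 = |h| ^ 2 * (1 + u ^ 2) by rw [sq_abs]; ring,
      mul_rpow (by positivity) (by positivity), ← rpow_natCast, ← rpow_mul (abs_nonneg h),
      sub_eq_add_neg, rpow_add (abs_pos.2 hh), rpow_one]
    push_cast
    ring_nf
  calc ∫⁻ u : ℝ, ENNReal.ofReal ((h ^ 2 + u ^ 2) ^ (-p))
      = ∫⁻ u in (h * ·) '' univ, ENNReal.ofReal ((h ^ 2 + u ^ 2) ^ (-p)) := by
        rw [image_univ, (mul_left_surjective₀ hh).range_eq, Measure.restrict_univ]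
    _ = ∫⁻ u, ENNReal.ofReal |h| * ENNReal.ofReal ((h ^ 2 + (h * u) ^ 2) ^ (-p)) := by
        rw [lintegral_image_eq_lintegral_abs_deriv_mul .univ
          (fun u _ => (hasDerivAt_const_mul h).hasDerivWithinAt)
          (mul_right_injective₀ hh).injOn, Measure.restrict_univ]
    _ = _ := by
        rw [← lintegral_const_mul' _ _ ENNReal.ofReal_ne_top]
        simp_rw [← ENNReal.ofReal_mul (abs_nonneg h), hscale,
          ENNReal.ofReal_mul (rpow_nonneg (abs_nonneg h) _)]

lemma lintegral_ofReal_one_add_sq_rpow_lt_top (hp : 1 / 2 < p) :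
    ∫⁻ u : ℝ, ENNReal.ofReal ((1 + u ^ 2) ^ (-p)) < ∞ := by
  have hintegrable := integrable_rpow_neg_one_add_norm_sq (E := ℝ) (μ := volume) (r := 2 * p)
    (by rw [Module.finrank_self]; push_cast; linarith)
  simpa [neg_div] using hintegrable.lintegral_lt_top

/-- The constant in the energy bound for random phase series: the density constant of
`mul_lintegral_comp_phaseSeries_le` times the rescaled energy integral. -/
noncomputable def energyConst (p : ℝ) : ℝ≥0∞ :=
  3 * cosMoment (-(1 / 2)) ^ 2 * ∫⁻ u : ℝ, ENNReal.ofReal ((1 + u ^ 2) ^ (-p))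

lemma energyConst_lt_top (hp : 1 / 2 < p) : energyConst p < ∞ :=
  ENNReal.mul_lt_top
    (ENNReal.mul_lt_top ENNReal.ofNat_lt_top
      (ENNReal.pow_lt_top (cosMoment_lt_top (by norm_num) (by norm_num))))
    (lintegral_ofReal_one_add_sq_rpow_lt_top hp)

lemma mul_lintegral_sq_add_phaseSeries_sq_rpow_le {ι : Type*} [Countable ι] {q : ι → ℝ}
    (hq : Summable fun i => |q i|) (r : ι → ℝ) {i j k : ι} (hij : i ≠ j) (hjk : j ≠ k)
    (hki : k ≠ i) {κ : ℝ≥0∞} (hi : κ ≤ ‖q i‖ₑ) (hj : κ ≤ ‖q j‖ₑ) (hk : κ ≤ ‖q k‖ₑ)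
    (hh : h ≠ 0) (p : ℝ) :
    κ * ∫⁻ Θ, ENNReal.ofReal ((h ^ 2 + phaseSeries q r Θ ^ 2) ^ (-p)) ∂phaseMeasure ι ≤
      ENNReal.ofReal (|h| ^ (1 - 2 * p)) * energyConst p := by
  rw [energyConst, mul_left_comm, ← lintegral_ofReal_sq_add_sq_rpow hh]
  exact mul_lintegral_comp_phaseSeries_le hq r hij hjk hki hi hj hk
    (φ := fun u => ENNReal.ofReal ((h ^ 2 + u ^ 2) ^ (-p))) (by fun_prop)

lemma sq_add_sq_add_sq_rpow_neg_le_mul (hh : h ≠ 0) (hp : 0 ≤ p) (u v : ℝ) :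
    (h ^ 2 + (u ^ 2 + v ^ 2)) ^ (-(2 * p)) ≤
      (h ^ 2 + u ^ 2) ^ (-p) * (h ^ 2 + v ^ 2) ^ (-p) := by
  calc (h ^ 2 + (u ^ 2 + v ^ 2)) ^ (-(2 * p)) = ((h ^ 2 + (u ^ 2 + v ^ 2)) ^ 2) ^ (-p) := by
        rw [← rpow_natCast (_ + _), ← rpow_mul (by positivity), Nat.cast_ofNat, mul_neg]
    _ ≤ ((h ^ 2 + u ^ 2) * (h ^ 2 + v ^ 2)) ^ (-p) := by
        refine rpow_le_rpow_of_nonpos (by positivity) ?_ (by linarith)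
        rw [sq (h ^ 2 + (u ^ 2 + v ^ 2))]
        gcongr <;> nlinarith [sq_nonneg u, sq_nonneg v]
    _ = (h ^ 2 + u ^ 2) ^ (-p) * (h ^ 2 + v ^ 2) ^ (-p) :=
        mul_rpow (by positivity) (by positivity)

end Energy

section Weierstrass

variable {b β : ℝ}

lemma summable_rpow_neg_mul_natCast (hb : 1 < b) (hβ : 0 < β) :
    Summable fun n : ℕ => b ^ (-β * (n : ℝ)) := by
  simp_rw [rpow_mul (zero_le_one.trans hb.le), rpow_natCast]
  exact summable_geometric_of_lt_one (by positivity)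
    (rpow_lt_one_of_one_lt_of_neg hb (neg_lt_zero.2 hβ))

lemma summable_rpow_neg_mul_natCast_mul (hb : 1 < b) (hβ : 0 < β) {c : ℕ → ℝ}
    (hc : ∀ n, |c n| ≤ 1) : Summable fun n : ℕ => b ^ (-β * (n : ℝ)) * c n := by
  refine .of_norm_bounded (summable_rpow_neg_mul_natCast hb hβ) fun n => ?_
  rw [norm_mul, norm_of_nonneg (by positivity)]
  exact mul_le_of_le_one_right (by positivity) (hc n)

/-- The amplitude of the `n`-th term of an increment over a displacement `δ` of either coordinate
of the Weierstrass function, written as a random phase series. -/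
noncomputable def weierstrassAmp (b β δ : ℝ) (n : ℕ) : ℝ :=
  2 * (b ^ (-β * (n : ℝ)) * sin (π * (b ^ n * δ)))

lemma summable_abs_weierstrassAmp (hb : 1 < b) (hβ : 0 < β) (δ : ℝ) :
    Summable fun n => |weierstrassAmp b β δ n| :=
  ((summable_rpow_neg_mul_natCast_mul hb hβ fun _ => abs_sin_le_one _).mul_left 2).abs

lemma W1_sub_W1_eq_phaseSeries (hb : 1 < b) (hβ : 0 < β) (Θ : ℕ → ℝ) (x y : ℝ) :
    W1 b β Θ x - W1 b β Θ y = phaseSeries (weierstrassAmp b β (x - y))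
      (fun n => π * (b ^ n * (x + y)) + π) Θ := by
  have hsummable (t : ℝ) :=
    summable_rpow_neg_mul_natCast_mul hb hβ fun n => abs_cos_le_one (2 * π * (b ^ n * t + Θ n))
  rw [W1, W1, ← (hsummable x).tsum_sub (hsummable y)]
  refine tsum_congr fun n => ?_
  rw [← mul_sub, cos_sub_cos, ← add_assoc, sin_add_pi, weierstrassAmp]
  ring_nf

lemma W2_sub_W2_eq_phaseSeries (hb : 1 < b) (hβ : 0 < β) (Λ : ℕ → ℝ) (x y : ℝ) :
    W2 b β Λ x - W2 b β Λ y = phaseSeries (weierstrassAmp b β (x - y))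
      (fun n => π * (b ^ n * (x + y)) + π / 2) Λ := by
  have hsummable (t : ℝ) :=
    summable_rpow_neg_mul_natCast_mul hb hβ fun n => abs_sin_le_one (2 * π * (b ^ n * t + Λ n))
  rw [W2, W2, ← (hsummable x).tsum_sub (hsummable y)]
  refine tsum_congr fun n => ?_
  rw [← mul_sub, sin_sub_sin, ← add_assoc, sin_add_pi_div_two, weierstrassAmp]
  ring_nf

lemma exists_forall_pow_mul_mem_Icc (hb : 1 < b) {h : ℝ} (hh : 0 < h) (hh' : h ≤ 1 / (2 * b ^ 2)) :
    ∃ m : ℕ, ∀ j ∈ Icc m (m + 2), b ^ j * h ∈ Icc (1 / (2 * b ^ 3)) (1 / 2) := by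
  have hb0 : 0 < b := zero_lt_one.trans hb
  have hb2 : b ^ 2 ≤ 1 / (2 * h) := by
    rw [le_div_iff₀ (by positivity)] at hh' ⊢
    linarith
  obtain ⟨n, hn, hn'⟩ := exists_nat_pow_near ((one_le_pow₀ hb.le).trans hb2) hb
  have hn2 : 2 < n + 1 := (pow_lt_pow_iff_right₀ hb).1 (hb2.trans_lt hn')
  refine ⟨n - 2, fun j ⟨hmj, hjm⟩ => ?_⟩
  have hupper : b ^ j ≤ 1 / (2 * h) := (pow_le_pow_right₀ hb.le (by omega)).trans hn
  have hlower : 1 / (2 * h) ≤ b ^ j * b ^ 3 := by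
    rw [← pow_add]
    exact hn'.le.trans (pow_le_pow_right₀ hb.le (by omega))
  rw [le_div_iff₀ (by positivity)] at hupper
  rw [div_le_iff₀ (by positivity)] at hlower
  rw [mem_Icc, div_le_iff₀ (by positivity)]
  constructor <;> linarith

lemma le_abs_weierstrassAmp (hb : 1 < b) (hβ : 0 < β) {δ : ℝ} {j : ℕ}
    (hj : b ^ j * |δ| ∈ Icc (1 / (2 * b ^ 3)) (1 / 2)) :
    2 * |δ| ^ β / b ^ 3 ≤ |weierstrassAmp b β δ j| := by
  obtain ⟨hlower, hupper⟩ := hj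
  have hb0 : 0 < b := zero_lt_one.trans hb
  have hJordan : 2 * (b ^ j * |δ|) ≤ |sin (π * (b ^ j * δ))| := by
    have habs : |π * (b ^ j * δ)| = π * (b ^ j * |δ|) := by
      rw [abs_mul, abs_mul, abs_of_pos pi_pos, abs_of_pos (pow_pos hb0 j)]
    calc 2 * (b ^ j * |δ|) = 2 / π * |π * (b ^ j * δ)| := by rw [habs]; field_simp
      _ ≤ _ := mul_abs_le_abs_sin (by rw [habs]; nlinarith [pi_pos])
  have hweight : |δ| ^ β ≤ b ^ (-β * (j : ℝ)) := by
    rw [mul_comm, rpow_mul hb0.le, rpow_natCast, rpow_neg (by positivity),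
      ← inv_rpow (by positivity)]
    refine rpow_le_rpow (abs_nonneg δ) ?_ hβ.le
    rw [← one_div, le_div_iff₀ (by positivity)]
    linarith
  calc 2 * |δ| ^ β / b ^ 3 = 2 * (|δ| ^ β * (2 * (1 / (2 * b ^ 3)))) := by field_simp
    _ ≤ 2 * (b ^ (-β * (j : ℝ)) * |sin (π * (b ^ j * δ))|) := by
        gcongr; linarith
    _ = |weierstrassAmp b β δ j| := by
        rw [weierstrassAmp, abs_mul, abs_mul, abs_of_pos (rpow_pos_of_pos hb0 _), abs_two]

lemma exists_lintegral_phaseSeries_weierstrassAmp_le (hb : 1 < b) (hβ : 0 < β) {p : ℝ}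
    (hp : 1 / 2 < p) :
    ∃ C > (0 : ℝ), ∀ (δ : ℝ) (r : ℕ → ℝ), 0 < |δ| → |δ| ≤ 1 / (2 * b ^ 2) →
      ∫⁻ Θ, ENNReal.ofReal ((δ ^ 2 + phaseSeries (weierstrassAmp b β δ) r Θ ^ 2) ^ (-p))
        ∂phaseMeasure ℕ ≤ ENNReal.ofReal (C * |δ| ^ (1 - 2 * p - β)) := by
  have : 0 < b := zero_lt_one.trans hb
  obtain ⟨D, hD⟩ := WithTop.ne_top_iff_exists.1 (energyConst_lt_top hp).ne
  refine ⟨(D + 1) * (b ^ 3 / 2), by positivity, fun δ r hδ hδ' => ?_⟩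
  obtain ⟨m, hm⟩ := exists_forall_pow_mul_mem_Icc hb hδ hδ'
  have hκ : 0 < 2 * |δ| ^ β / b ^ 3 := by positivity
  have hamp (j : ℕ) (hj : j ∈ Icc m (m + 2)) :
      ENNReal.ofReal (2 * |δ| ^ β / b ^ 3) ≤ ‖weierstrassAmp b β δ j‖ₑ := by
    rw [enorm_eq_ofReal_abs]
    exact ENNReal.ofReal_le_ofReal (le_abs_weierstrassAmp hb hβ (hm j hj))
  refine (ENNReal.mul_le_mul_iff_right (ENNReal.ofReal_pos.2 hκ).ne' ENNReal.ofReal_ne_top).1 ?_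
  calc ENNReal.ofReal (2 * |δ| ^ β / b ^ 3) * ∫⁻ Θ, ENNReal.ofReal
        ((δ ^ 2 + phaseSeries (weierstrassAmp b β δ) r Θ ^ 2) ^ (-p)) ∂phaseMeasure ℕ
      ≤ ENNReal.ofReal (|δ| ^ (1 - 2 * p)) * energyConst p :=
        mul_lintegral_sq_add_phaseSeries_sq_rpow_le (i := m) (j := m + 1) (k := m + 2)
          (summable_abs_weierstrassAmp hb hβ δ) r (by omega) (by omega) (by omega)
          (hamp _ (by simp)) (hamp _ (by simp)) (hamp _ (by simp)) (abs_pos.1 hδ) p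
    _ = ENNReal.ofReal (|δ| ^ (1 - 2 * p) * D) := by
        rw [ENNReal.ofReal_mul (by positivity), ENNReal.ofReal_coe_nnreal, ← hD]
        rfl
    _ ≤ ENNReal.ofReal ((2 * |δ| ^ β / b ^ 3) *
          ((D + 1) * (b ^ 3 / 2) * |δ| ^ (1 - 2 * p - β))) := by
        refine ENNReal.ofReal_le_ofReal ?_
        calc |δ| ^ (1 - 2 * p) * D ≤ |δ| ^ (1 - 2 * p) * (D + 1) := by gcongr; linarith
          _ = _ := by rw [rpow_sub hδ _ β]; field_simp
    _ = _ := ENNReal.ofReal_mul hκ.le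

lemma IsUniformProductMeasure.eq_phaseMeasure {μ : Measure (ℕ → ℝ)}
    (hμ : IsUniformProductMeasure μ) : μ = phaseMeasure ℕ :=
  Measure.eq_infinitePi _ fun s t ht => hμ s t ht

end Weierstrass

theorem stmt_9_general (b β s : ℝ) (hb : 1 < b) (hβ : 0 < β) (hs : 2 < s) :
    ∃ C₀ > (0 : ℝ), ∀ μ : Measure (ℕ → ℝ), IsUniformProductMeasure μ → ∀ x y : ℝ,
      0 < |x - y| → |x - y| ≤ 1 / (2 * b ^ 2) →
      (∫⁻ p, ENNReal.ofReal
          (((x - y) ^ 2 + (Wdist b β p.1 p.2 x y) ^ 2) ^ (-(s / 2))) ∂ μ.prod μ)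
        ≤ ENNReal.ofReal (C₀ * |x - y| ^ (2 - s - 2 * β)) := by
  obtain ⟨C, hC, hbound⟩ :=
    exists_lintegral_phaseSeries_weierstrassAmp_le hb hβ (p := s / 4) (by linarith)
  refine ⟨C ^ 2, by positivity, fun μ hμ x y hxy hxy' => ?_⟩
  rw [hμ.eq_phaseMeasure]
  have hamp := summable_abs_weierstrassAmp hb hβ (x - y)
  let φ (u : ℝ) : ℝ≥0∞ := ENNReal.ofReal (((x - y) ^ 2 + u ^ 2) ^ (-(s / 4)))
  let X := phaseSeries (weierstrassAmp b β (x - y)) fun n => π * (b ^ n * (x + y)) + π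
  let Y := phaseSeries (weierstrassAmp b β (x - y)) fun n => π * (b ^ n * (x + y)) + π / 2
  have hφ : Measurable φ := by fun_prop
  calc ∫⁻ p, ENNReal.ofReal (((x - y) ^ 2 + (Wdist b β p.1 p.2 x y) ^ 2) ^ (-(s / 2)))
        ∂(phaseMeasure ℕ).prod (phaseMeasure ℕ)
      ≤ ∫⁻ p, φ (X p.1) * φ (Y p.2) ∂(phaseMeasure ℕ).prod (phaseMeasure ℕ) := by
        refine lintegral_mono fun p => ?_
        rw [← ENNReal.ofReal_mul (by positivity), Wdist, sq_sqrt (by positivity),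
          W1_sub_W1_eq_phaseSeries hb hβ, W2_sub_W2_eq_phaseSeries hb hβ,
          show s / 2 = 2 * (s / 4) by ring]
        exact ENNReal.ofReal_le_ofReal
          (sq_add_sq_add_sq_rpow_neg_le_mul (abs_pos.1 hxy) (by linarith) _ _)
    _ = (∫⁻ Θ, φ (X Θ) ∂phaseMeasure ℕ) * ∫⁻ Λ, φ (Y Λ) ∂phaseMeasure ℕ :=
        lintegral_prod_mul (hφ.comp (measurable_phaseSeries hamp _)).aemeasurable
          (hφ.comp (measurable_phaseSeries hamp _)).aemeasurable
    _ ≤ ENNReal.ofReal (C * |x - y| ^ (1 - 2 * (s / 4) - β)) *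
          ENNReal.ofReal (C * |x - y| ^ (1 - 2 * (s / 4) - β)) :=
        mul_le_mul' (hbound _ _ hxy hxy') (hbound _ _ hxy hxy')
    _ = ENNReal.ofReal (C ^ 2 * |x - y| ^ (2 - s - 2 * β)) := by
        rw [← ENNReal.ofReal_mul (by positivity), mul_mul_mul_comm, ← rpow_add hxy, ← sq]
        ring_nf

/-- there is `C₀ > 0` (depending only on `b`, `β`, `s`) such that for all
`x, y ∈ [0,1]` with `0 < |x-y| ≤ 1/(2b²)`,
`E[((x-y)² + |f(x)-f(y)|²)^{-s/2}] ≤ C₀ |x-y|^{2-s-2β}`. -/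
theorem stmt_9 (b β s : ℝ) (hb : 1 < b) (hβ : β ∈ Set.Ioo (0 : ℝ) (1 / 2))
    (hs : s ∈ Set.Ioo (2 : ℝ) (3 - 2 * β))
    (μ : Measure (ℕ → ℝ)) (hμ : IsUniformProductMeasure μ) :
    ∃ C₀ > (0 : ℝ), ∀ x ∈ Set.Icc (0 : ℝ) 1, ∀ y ∈ Set.Icc (0 : ℝ) 1,
      0 < |x - y| → |x - y| ≤ 1 / (2 * b ^ 2) →
      (∫⁻ p, ENNReal.ofReal
          (((x - y) ^ 2 + (Wdist b β p.1 p.2 x y) ^ 2) ^ (-(s / 2))) ∂ μ.prod μ)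
        ≤ ENNReal.ofReal (C₀ * |x - y| ^ (2 - s - 2 * β)) := by
  obtain ⟨C₀, hC₀, hbound⟩ := stmt_9_general b β s hb hβ.1 hs.1
  exact ⟨C₀, hC₀, fun x _ y _ => hbound μ hμ x y⟩
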